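/- arXiv:2207.05006 — 2 statements merged into one kernel-verified Lean document; each statement's English description precedes it below -/
import Mathlib

section
/- Let V be a type, R : V → V → Prop a binary relation, g : Set V, and let C = {v | ∃ u ∈ g, Relation.ReflTransGen R u v} be the set of vertices reachable from g under R. Then for every v ∈ C there exists u ∈ g such that u and v are related by the reflexive–transitive closure of the relation R restricted to C, i.e. Relation.ReflTransGen (fun a b => R a b ∧ a ∈ C ∧ b ∈ C) u v. In other words, every retained vertex is reachable from the seed set by a chain all of whose intermediate vertices are themselves retained. (This is the completeness direction of the SCRUB proposition: restricting the planning problem to the sparsified subgraph does not destroy any reachability used by a plan, so a plan exists on the scrubbed graph iff one exists on the full graph.) -/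
section

variable {α : Type*} {r : α → α → Prop}

theorem reflTransGen_restrict_of_forward_closed {s : Set α} {a b : α}
    (hs : ∀ ⦃x y⦄, x ∈ s → r x y → y ∈ s) (ha : a ∈ s) (hab : Relation.ReflTransGen r a b) :
    Relation.ReflTransGen (fun x y => r x y ∧ x ∈ s ∧ y ∈ s) a b := by
  induction hab using Relation.ReflTransGen.head_induction_on with
  | refl => exact .refl
  | head hac _ ih =>
    have hc := hs ha hac
    exact (ih hc).head ⟨hac, ha, hc⟩

/-- The set of points reachable from `g` along `r`, including `g` itself; for the predicates of a
scene graph and the objects of the goal this is SCRUB's sufficient object set. -/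
def reachableSet (r : α → α → Prop) (g : Set α) : Set α :=
  {v | ∃ u ∈ g, Relation.ReflTransGen r u v}

theorem subset_reachableSet (g : Set α) : g ⊆ reachableSet r g :=
  fun u hu => ⟨u, hu, .refl⟩

theorem mem_reachableSet_of_rel {g : Set α} {a b : α} (ha : a ∈ reachableSet r g) (hab : r a b) :
    b ∈ reachableSet r g :=
  let ⟨u, hu, hua⟩ := ha
  ⟨u, hu, hua.tail hab⟩

end

/-- Completeness of SCRUB: every vertex retained in the sufficient set
`C = {v | ∃ u ∈ g, Relation.ReflTransGen R u v}` is reachable from the seed set `g`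
via a chain lying entirely inside `C`. -/
theorem scrub_reachable_within_retained {V : Type*} (R : V → V → Prop) (g : Set V)
    (v : V) (hv : v ∈ {v | ∃ u ∈ g, Relation.ReflTransGen R u v}) :
    ∃ u ∈ g, Relation.ReflTransGen
      (fun a b => R a b ∧ a ∈ {v | ∃ u ∈ g, Relation.ReflTransGen R u v}
        ∧ b ∈ {v | ∃ u ∈ g, Relation.ReflTransGen R u v}) u v := by
  obtain ⟨u, hu, huv⟩ := hv
  have hu_mem : u ∈ reachableSet R g := subset_reachableSet g hu
  exact ⟨u, hu, reflTransGen_restrict_of_forward_closed (s := reachableSet R g)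
    (fun _ _ => mem_reachableSet_of_rel) hu_mem huv⟩
end

section
/- Let G be a tree on a finite vertex type V (a connected acyclic simple graph), r : V a root, and g : Set V a set of goal vertices. Let C be the union, over v ∈ g, of the vertex sets of the unique paths in G from r to v. Then every subset T of V that contains r and g and such that, in the subgraph of G induced on T, r is reachable from every v ∈ g, must satisfy C ⊆ T. (This is the minimality claim of the SCRUB proposition: any scene subgraph in which the agent at the root can still reach every goal object must contain all nodes retained by SCRUB, so SCRUB's output is the minimal sufficient subgraph.) -/
section

variable {V : Type*} {G : SimpleGraph V}

theorem support_subset_support_of_isAcyclic_of_isPath {u v : V} (hG : G.IsAcyclic)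
    {p : G.Walk u v} (hp : p.IsPath) (q : G.Walk u v) : p.support ⊆ q.support := by
  classical
  have path_eq : (⟨p, hp⟩ : G.Path u v) = q.toPath := (hG.subsingleton_path u v).elim _ _
  have walk_eq : p = q.toPath := congrArg Subtype.val path_eq
  exact walk_eq ▸ q.support_toPath_subset_support

theorem mem_of_mem_support_map_induce {T : Set V} {a b : T} (q : (G.induce T).Walk a b) {x : V}
    (hx : x ∈ (q.map (SimpleGraph.Embedding.induce T).toHom).support) : x ∈ T := by
  rw [SimpleGraph.Walk.support_map] at hx
  obtain ⟨y, -, rfl⟩ := List.mem_map.1 hx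
  exact y.2

theorem induce_reachable_iff_exists_walk {T : Set V} {a b : T} :
    (G.induce T).Reachable a b ↔ ∃ q : G.Walk a b, ∀ x ∈ q.support, x ∈ T :=
  ⟨fun ⟨q⟩ ↦ ⟨q.map (SimpleGraph.Embedding.induce T).toHom,
    fun _ ↦ mem_of_mem_support_map_induce q⟩,
    fun ⟨q, hq⟩ ↦ ⟨q.induce T hq⟩⟩

end

theorem scrub_minimality_general {V : Type*} (G : SimpleGraph V)
    (hG : G.IsAcyclic) (r : V) (g : Set V)
    (T : Set V) (hrT : r ∈ T) (hgT : g ⊆ T)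
    (hreach : ∀ v (hv : v ∈ g),
      (G.induce T).Reachable ⟨v, hgT hv⟩ ⟨r, hrT⟩) :
    {x | ∃ v ∈ g, ∃ p : G.Walk r v, p.IsPath ∧ x ∈ p.support} ⊆ T := by
  rintro x ⟨v, hv, p, hp, hx⟩
  obtain ⟨q, hqT⟩ := induce_reachable_iff_exists_walk.1 (hreach v hv).symm
  exact hqT x (support_subset_support_of_isAcyclic_of_isPath hG hp q hx)

/-- Minimality of SCRUB: in a tree `G` rooted at `r`, the union `C` of the supports of
the unique paths from `r` to the goal vertices `g` is contained in any vertex set `T`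
containing `r` and `g` in whose induced subgraph `r` remains reachable from every
goal vertex. -/
theorem scrub_minimality {V : Type*} [Fintype V] (G : SimpleGraph V)
    (hG : G.IsTree) (r : V) (g : Set V)
    (T : Set V) (hrT : r ∈ T) (hgT : g ⊆ T)
    (hreach : ∀ v (hv : v ∈ g),
      (G.induce T).Reachable ⟨v, hgT hv⟩ ⟨r, hrT⟩) :
    {x | ∃ v ∈ g, ∃ p : G.Walk r v, p.IsPath ∧ x ∈ p.support} ⊆ T :=
  scrub_minimality_general G hG.isAcyclic r g T hrT hgT hreach
end
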